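/- Let Γ be a finitely generated group and let ρ₁, ρ₂ : Γ → PSL(2,ℂ) be group homomorphisms, both irreducible, such that for every γ ∈ Γ and all matrices A₁, A₂ ∈ SL(2,ℂ) whose classes in PSL(2,ℂ) are ρ₁(γ) and ρ₂(γ) respectively, one has (tr A₁)² = (tr A₂)². Then ρ₁ and ρ₂ are conjugate: there exists C ∈ SL(2,ℂ) such that ρ₂(γ) = [C] · ρ₁(γ) · [C]⁻¹ for all γ ∈ Γ, where [C] is the class of C in PSL(2,ℂ). -/

import Mathlib

/-!
The matrix `tr(A) A` does not change when `A` is replaced by `-A`, so it is determined by the class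
of `A` in `PSL(2)`. For two representations with the same squared character, polarization shows that
the traces of products of two or three such matrices agree. If these matrices span `M₂`, then
matching them preserves the trace form and the multiplication, so it is an automorphism of `M₂`, and
by Skolem–Noether a conjugation. This conjugation intertwines the representations up to sign, since
a matrix commuting with a spanning set is scalar.

If they do not span, Burnside's theorem gives them a common eigenvector, and by irreducibility a
common eigenbasis. The image in `PSL(2)` is then dihedral or a Klein four-group: it preserves the
axis of some element `h`, and every element commutes or anticommutes with the traceless part `N` of
a lift of `h`, both cases occurring. Conjugating so that `N` and one element anticommuting with it
agree for both representations settles everything: an element commuting with `N` is a combination of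
`1` and `N` whose coefficients are fixed, up to a common sign, by the squared character.
-/

open Matrix

/-- `PSL(2,ℂ)`: the quotient of `SL(2,ℂ)` by its center `{I, −I}`. -/
abbrev PSL2 : Type :=
  SpecialLinearGroup (Fin 2) ℂ ⧸ Subgroup.center (SpecialLinearGroup (Fin 2) ℂ)

/-- The canonical projection `SL(2,ℂ) → PSL(2,ℂ)`, `A ↦ [A]`. -/
abbrev pslProj : SpecialLinearGroup (Fin 2) ℂ →* PSL2 :=
  QuotientGroup.mk' (Subgroup.center (SpecialLinearGroup (Fin 2) ℂ))

/-- A homomorphism `ρ : Γ → PSL(2,ℂ)` is irreducible if there is no nonzero `v ∈ ℂ²`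
such that every lift to `SL(2,ℂ)` of every `ρ(γ)` preserves the line `ℂ·v`. -/
def IsIrreduciblePSL {Γ : Type*} [Group Γ] (ρ : Γ →* PSL2) : Prop :=
  ¬ ∃ v : Fin 2 → ℂ, v ≠ 0 ∧ ∀ γ : Γ, ∀ A : SpecialLinearGroup (Fin 2) ℂ,
      pslProj A = ρ γ → ∃ c : ℂ, (A : Matrix (Fin 2) (Fin 2) ℂ) *ᵥ v = c • v

section FinTwo

variable {R : Type*} [CommRing R] (A B C : Matrix (Fin 2) (Fin 2) R)

theorem add_adjugate_fin_two : A + A.adjugate = A.trace • 1 := by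
  rw [eta_fin_two A, adjugate_fin_two_of, one_fin_two]
  ext i j
  fin_cases i <;> fin_cases j <;> simp [add_comm]

theorem mul_self_fin_two : A * A = A.trace • A - A.det • 1 := by
  rw [← mul_adjugate, eq_sub_iff_add_eq, ← mul_add, add_adjugate_fin_two, mul_smul_comm, mul_one]

theorem mul_add_mul_fin_two :
    A * B + B * A =
      A.trace • B + B.trace • A + ((A * B).trace - A.trace * B.trace) • 1 := by
  rw [eta_fin_two A, eta_fin_two B, one_fin_two]
  ext i j
  fin_cases i <;> fin_cases j <;> simp [trace_fin_two_of] <;> ring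

theorem trace_mul_mul_add_fin_two :
    (A * B * C).trace + (A * C * B).trace =
      A.trace * (B * C).trace + B.trace * (C * A).trace + C.trace * (A * B).trace
        - A.trace * B.trace * C.trace := by
  have h := congrArg trace (congrArg (A * ·) (mul_add_mul_fin_two B C))
  simp only [mul_add, ← mul_assoc, trace_add, mul_smul_comm, trace_smul, smul_eq_mul, mul_one] at h
  rw [h, trace_mul_comm C A]
  ring

end FinTwo

section TraceForm

variable {R : Type*} [CommRing R] {n ι : Type*} [Fintype n]

theorem eq_of_forall_trace_mul_eq {Y : ι → Matrix n n R}
    (hY : Submodule.span R (Set.range Y) = ⊤) {A B : Matrix n n R}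
    (h : ∀ i, (A * Y i).trace = (B * Y i).trace) : A = B := by
  classical
  rw [ext_iff_trace_mul_right]
  intro Z
  have hlin : traceLinearMap n R R ∘ₗ LinearMap.mulLeft R A =
      traceLinearMap n R R ∘ₗ LinearMap.mulLeft R B :=
    LinearMap.ext_on_range hY h
  exact LinearMap.congr_fun hlin Z

theorem exists_linearEquiv_of_trace_mul_eq {K : Type*} [Field K] {X Y : ι → Matrix n n K}
    (hX : Submodule.span K (Set.range X) = ⊤)
    (h₂ : ∀ i j, (X i * X j).trace = (Y i * Y j).trace) :
    Submodule.span K (Set.range Y) = ⊤ ∧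
      ∃ φ : Matrix n n K ≃ₗ[K] Matrix n n K,
        ∀ Z j, (φ Z * Y j).trace = (Z * X j).trace := by
  classical
  let toX := Finsupp.linearCombination K X
  let toY := Finsupp.linearCombination K Y
  have htoX : LinearMap.range toX = ⊤ := by rw [Finsupp.range_linearCombination, hX]
  have htr (f : ι →₀ K) (j : ι) : (toY f * Y j).trace = (toX f * X j).trace := by
    simp only [toX, toY, Finsupp.linearCombination_apply, Finsupp.sum, Finset.sum_mul, trace_sum,
      smul_mul_assoc, trace_smul, h₂]
  obtain ⟨s, hs⟩ := toX.exists_rightInverse_of_surjective htoX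
  have hφ (Z : Matrix n n K) (j : ι) : ((toY ∘ₗ s) Z * Y j).trace = (Z * X j).trace := by
    rw [LinearMap.comp_apply, htr, ← LinearMap.comp_apply, hs, LinearMap.id_apply]
  have hinj : Function.Injective (toY ∘ₗ s) := fun Z Z' hZ =>
    eq_of_forall_trace_mul_eq hX fun j => by rw [← hφ, ← hφ, hZ]
  have hsurj := LinearMap.injective_iff_surjective.mp hinj
  refine ⟨?_, LinearEquiv.ofBijective (toY ∘ₗ s) ⟨hinj, hsurj⟩, hφ⟩
  rw [← Finsupp.range_linearCombination, LinearMap.range_eq_top]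
  exact Function.Surjective.of_comp (g := s) hsurj

variable [DecidableEq n]

theorem exists_eq_smul_one_of_forall_commute {Y : ι → Matrix n n R}
    (hY : Submodule.span R (Set.range Y) = ⊤) {Z : Matrix n n R} (h : ∀ i, Commute Z (Y i)) :
    ∃ z : R, Z = z • 1 := by
  have hlin : LinearMap.mulLeft R Z = LinearMap.mulRight R Z :=
    LinearMap.ext_on_range hY h
  have hZ : Z ∈ Set.center (Matrix n n R) :=
    Semigroup.mem_center_iff.mpr fun A => (LinearMap.congr_fun hlin A).symm
  obtain ⟨z, rfl⟩ := (center_eq_range R).le hZ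
  exact ⟨z, (smul_one_eq_diagonal z).symm⟩

theorem exists_conj_of_algEquiv {K : Type*} [Field K] (f : Matrix n n K ≃ₐ[K] Matrix n n K) :
    ∃ P : GL n K, ∀ A, f A * P = P * A := by
  obtain ⟨T, hT⟩ :=
    (toLinAlgEquiv'.symm.trans (f.trans toLinAlgEquiv')).eq_linearEquivConjAlgEquiv
  let P : GL n K := GeneralLinearGroup.toLin.symm (LinearMap.GeneralLinearGroup.ofLinearEquiv T)
  have hP : toLin' (P : Matrix n n K) = T :=
    congrArg Units.val (GeneralLinearGroup.toLin.apply_symm_apply _)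
  refine ⟨P, fun A => toLin'.injective ?_⟩
  have hA : toLin' (f A) = T ∘ₗ toLin' A ∘ₗ T.symm := by
    have h := AlgEquiv.congr_fun hT (toLinAlgEquiv' A)
    rwa [AlgEquiv.trans_apply, AlgEquiv.trans_apply, AlgEquiv.symm_apply_apply,
      LinearEquiv.conjAlgEquiv_apply] at h
  rw [toLin'_mul, toLin'_mul, hP, hA]
  ext
  simp

theorem exists_conj_of_trace_eq {K : Type*} [Field K] {X Y : ι → Matrix n n K}
    (hX : Submodule.span K (Set.range X) = ⊤)
    (h₂ : ∀ i j, (X i * X j).trace = (Y i * Y j).trace)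
    (h₃ : ∀ i j k, (X i * X j * X k).trace = (Y i * Y j * Y k).trace) :
    ∃ P : GL n K, ∀ i, Y i * P = P * X i := by
  obtain ⟨hY, φ, hφ⟩ := exists_linearEquiv_of_trace_mul_eq hX h₂
  have hφX (i : ι) : φ (X i) = Y i := eq_of_forall_trace_mul_eq hY fun j => by rw [hφ, h₂]
  have hφXX (i j : ι) : φ (X i * X j) = φ (X i) * φ (X j) :=
    eq_of_forall_trace_mul_eq hY fun k => by rw [hφ, hφX, hφX, h₃]
  have hmul (A B : Matrix n n K) : φ (A * B) = φ A * φ B := by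
    have hbil : (LinearMap.mul K _).compr₂ φ.toLinearMap =
        (LinearMap.mul K _).compl₁₂ φ.toLinearMap φ.toLinearMap :=
      LinearMap.ext_on_range hX fun i => LinearMap.ext_on_range hX fun j => hφXX i j
    exact LinearMap.congr_fun₂ hbil A B
  have hone : φ 1 = 1 := by
    obtain ⟨Z, hZ⟩ := φ.surjective 1
    calc φ 1 = φ 1 * φ Z := by rw [hZ, mul_one]
      _ = 1 := by rw [← hmul, one_mul, hZ]
  obtain ⟨P, hP⟩ := exists_conj_of_algEquiv (AlgEquiv.ofLinearEquiv φ hone hmul)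
  exact ⟨P, fun i => by rw [← hφX]; exact hP (X i)⟩

end TraceForm

section CommonEigenvector

/-- A set of matrices has a common eigenvector if they all preserve some line. A homomorphism to
matrices is reducible in dimension two exactly when its range has one. -/
def HasCommonEigenvector {K n : Type*} [Field K] [Fintype n] (S : Set (Matrix n n K)) : Prop :=
  ∃ v : n → K, v ≠ 0 ∧ ∀ A ∈ S, ∃ c : K, A *ᵥ v = c • v

variable {K : Type*} [Field K] [IsAlgClosed K]

theorem subalgebra_end_eq_top_of_invariant {V : Type*} [AddCommGroup V] [Module K V]
    [FiniteDimensional K V] [Nontrivial V] (S : Subalgebra K (Module.End K V))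
    (hS : ∀ W : Submodule K V, (∀ f ∈ S, W ∈ Module.End.invtSubmodule f) → W = ⊥ ∨ W = ⊤) :
    S = ⊤ := by
  have : IsSimpleModule S V := by
    rw [isSimpleModule_iff]
    refine { eq_bot_or_eq_top := fun W => ?_ }
    simpa using hS (W.restrictScalars K) fun f hf w hw => W.smul_mem ⟨f, hf⟩ hw
  refine eq_top_iff.mpr fun f _ => ?_
  have hscalar := (IsSimpleModule.algebraMap_end_bijective_of_isAlgClosed (A := S) (V := V) K).2
  let F : Module.End (Module.End S V) V :=
    { f with
      map_smul' := fun e v => by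
        obtain ⟨c, rfl⟩ := hscalar e
        exact f.map_smul c v }
  classical
  let b := Module.finBasis K V
  obtain ⟨⟨g, hg⟩, hgb⟩ := jacobson_density (R := S) F (Finset.univ.image b)
  have hfg : f = g := b.ext fun i => hgb (b i) (by simp)
  exact hfg ▸ hg

theorem hasCommonEigenvector_of_subalgebra_ne_top {S : Subalgebra K (Matrix (Fin 2) (Fin 2) K)}
    (hS : S ≠ ⊤) : HasCommonEigenvector (S : Set (Matrix (Fin 2) (Fin 2) K)) := by
  let S' := S.map (toLinAlgEquiv' (R := K) (n := Fin 2)).toAlgHom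
  have hS' : S' ≠ ⊤ := fun htop => hS <| eq_top_iff.mpr fun A _ => by
    obtain ⟨B, hB, hBA⟩ := htop.ge (Algebra.mem_top (x := toLinAlgEquiv' A))
    rwa [← toLinAlgEquiv'.injective hBA]
  obtain ⟨W, hinv, hbot, htop⟩ : ∃ W : Submodule K (Fin 2 → K),
      (∀ f ∈ S', W ∈ Module.End.invtSubmodule f) ∧ W ≠ ⊥ ∧ W ≠ ⊤ := by
    by_contra! hW
    exact hS' (subalgebra_end_eq_top_of_invariant S' fun W h => or_iff_not_imp_left.mpr (hW W h))
  have hrank : Module.finrank K W = 1 := by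
    have hlt := Submodule.finrank_lt htop
    have hpos := Submodule.one_le_finrank_iff.mpr hbot
    rw [Module.finrank_fin_fun] at hlt
    lia
  obtain ⟨v, hv, hspan⟩ := finrank_eq_one_iff'.mp hrank
  refine ⟨v, by simpa using hv, fun A hA => ?_⟩
  obtain ⟨c, hc⟩ := hspan ⟨A *ᵥ v, hinv _ ⟨A, hA, rfl⟩ v.2⟩
  exact ⟨c, congrArg Subtype.val hc.symm⟩

end CommonEigenvector

section Involution

variable {R : Type*} [CommRing R] {X N : Matrix (Fin 2) (Fin 2) R} {c : R}

theorem smul_eq_of_commute_of_mul_self (hXN : Commute X N) (hN₀ : N.trace = 0)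
    (hN : N * N = c • 1) :
    (2 * c) • X = (c * X.trace) • 1 + (X * N).trace • N := by
  have h := mul_add_mul_fin_two X N
  rw [← hXN.eq, hN₀, mul_zero, sub_zero, zero_smul, add_zero, ← two_smul R] at h
  calc (2 * c) • X = ((2 : R) • (X * N)) * N := by
        rw [smul_mul_assoc, mul_assoc, hN, mul_smul_comm, mul_one, smul_smul]
    _ = (c * X.trace) • 1 + (X * N).trace • N := by
        rw [h, add_mul, smul_mul_assoc, smul_mul_assoc, hN, one_mul, smul_smul, mul_comm c]

theorem trace_mul_sq_of_commute_of_mul_self (hXN : Commute X N) (hN₀ : N.trace = 0)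
    (hN : N * N = c • 1) :
    (X * N).trace ^ 2 = c * (X.trace ^ 2 - 4 * X.det) := by
  have h := congrArg (fun A => (A * X).trace) (smul_eq_of_commute_of_mul_self hXN hN₀ hN)
  simp only [add_mul, smul_mul_assoc, one_mul, trace_add, trace_smul, smul_eq_mul, ← hXN.eq,
    mul_self_fin_two X, trace_sub, trace_one, Fintype.card_fin, Nat.cast_ofNat] at h
  linear_combination -h

theorem trace_eq_zero_of_anticommute {K n : Type*} [Field K] [NeZero (2 : K)] [Fintype n]
    [DecidableEq n] {X N : Matrix n n K} {c : K} (hXN : X * N = -(N * X)) (hN : N * N = c • 1)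
    (hc : c ≠ 0) : X.trace = 0 := by
  have h : c * X.trace = -(c * X.trace) :=
    calc c * X.trace = (X * (N * N)).trace := by
          rw [hN, mul_smul_comm, mul_one, trace_smul, smul_eq_mul]
      _ = -(N * X * N).trace := by rw [← mul_assoc, hXN, neg_mul, trace_neg]
      _ = -(c * X.trace) := by
          rw [trace_mul_cycle, hN, smul_mul_assoc, one_mul, trace_smul, smul_eq_mul]
  have h₂ : 2 * (c * X.trace) = 0 := by linear_combination h
  simpa [hc, two_ne_zero] using h₂

end Involution

section Eigenvectors

theorem mulVec_mulVec_eq_neg_smul_of_anticommute {R n : Type*} [CommRing R] [Fintype n]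
    {N P : Matrix n n R} {v : n → R} {m : R} (hPN : P * N = -(N * P)) (hv : N *ᵥ v = m • v) :
    N *ᵥ (P *ᵥ v) = -(m • (P *ᵥ v)) := by
  rw [mulVec_mulVec, ← neg_neg (N * P), ← hPN, neg_mulVec, ← mulVec_mulVec, hv, mulVec_smul]

theorem mulVec_mulVec_of_mul_self {R n : Type*} [CommRing R] [Fintype n] [DecidableEq n]
    {P : Matrix n n R} {e : R} (hP : P * P = e • 1) (v : n → R) : P *ᵥ (P *ᵥ v) = e • v := by
  rw [mulVec_mulVec, hP, smul_mulVec, one_mulVec]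

theorem mulVec_ne_zero_of_mul_self {K n : Type*} [Field K] [Fintype n] [DecidableEq n]
    {P : Matrix n n K} {e : K} (he : e ≠ 0) (hP : P * P = e • 1) {v : n → K} (hv : v ≠ 0) :
    P *ᵥ v ≠ 0 := fun h =>
  smul_ne_zero he hv (by rw [← mulVec_mulVec_of_mul_self hP, h, mulVec_zero])

variable {K : Type*} [Field K] [IsAlgClosed K]

theorem exists_mulVec_eq_smul {n : Type*} [Fintype n] [Nonempty n] (N : Matrix n n K) :
    ∃ (m : K) (v : n → K), v ≠ 0 ∧ N *ᵥ v = m • v := by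
  obtain ⟨m, hm⟩ := Module.End.exists_eigenvalue N.mulVecLin
  obtain ⟨v, hv⟩ := hm.exists_hasEigenvector
  exact ⟨m, v, hv.2, hv.apply_eq_smul⟩

theorem exists_eigenvector_of_anticommute {n : Type*} [Fintype n] [DecidableEq n] [Nonempty n]
    {N P : Matrix n n K} {m e : K} (he : e ≠ 0) (hN : N * N = (m * m) • 1) (hP : P * P = e • 1)
    (hPN : P * N = -(N * P)) : ∃ v : n → K, v ≠ 0 ∧ N *ᵥ v = m • v := by
  obtain ⟨α, v, hv, hNv⟩ := exists_mulVec_eq_smul N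
  have hα : α * α = m * m := smul_left_injective K hv <|
    calc (α * α) • v = N *ᵥ (N *ᵥ v) := by rw [hNv, mulVec_smul, hNv, smul_smul]
      _ = (m * m) • v := mulVec_mulVec_of_mul_self hN v
  rcases mul_self_eq_mul_self_iff.mp hα with rfl | rfl
  · exact ⟨v, hv, hNv⟩
  · exact ⟨P *ᵥ v, mulVec_ne_zero_of_mul_self he hP hv,
      by simpa using mulVec_mulVec_eq_neg_smul_of_anticommute hPN hNv⟩

variable [NeZero (2 : K)] {N : Matrix (Fin 2) (Fin 2) K} {c : K}

theorem hasCommonEigenvector_of_commute (hN₀ : N.trace = 0) (hN : N * N = c • 1) (hc : c ≠ 0)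
    {S : Set (Matrix (Fin 2) (Fin 2) K)} (hS : ∀ X ∈ S, Commute X N) :
    HasCommonEigenvector S := by
  obtain ⟨m, v, hv, hNv⟩ := exists_mulVec_eq_smul N
  refine ⟨v, hv, fun X hX => ⟨(2 * c)⁻¹ * (c * X.trace + (X * N).trace * m), ?_⟩⟩
  rw [mul_smul, eq_inv_smul_iff₀ (mul_ne_zero two_ne_zero hc), ← smul_mulVec,
    smul_eq_of_commute_of_mul_self (hS X hX) hN₀ hN, add_mulVec, smul_mulVec, smul_mulVec,
    one_mulVec, hNv, smul_smul, add_smul]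

theorem exists_adapted_basis_of_anticommute {P : Matrix (Fin 2) (Fin 2) K} {m e : K}
    (hm : m ≠ 0) (he : e ≠ 0) (hN : N * N = (m * m) • 1) (hP : P * P = e • 1)
    (hPN : P * N = -(N * P)) :
    ∃ Q : GL (Fin 2) K, N * Q = Q * !![m, 0; 0, -m] ∧ P * Q = Q * !![0, e; 1, 0] := by
  obtain ⟨v, hv, hNv⟩ := exists_eigenvector_of_anticommute he hN hP hPN
  have hli : LinearIndependent K ![v, P *ᵥ v] := by
    refine (LinearIndependent.pair_iff' hv).mpr fun a ha => mulVec_ne_zero_of_mul_self he hP hv ?_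
    have h : m • (P *ᵥ v) = -(m • (P *ᵥ v)) := by
      rw [← mulVec_mulVec_eq_neg_smul_of_anticommute hPN hNv, ← ha, mulVec_smul, hNv, smul_comm]
    have h₂ : (2 * m) • (P *ᵥ v) = 0 := by
      rw [mul_smul, two_smul]
      nth_rw 1 [h]
      exact neg_add_cancel _
    exact (smul_eq_zero.mp h₂).resolve_left (mul_ne_zero two_ne_zero hm)
  have hNPv := mulVec_mulVec_eq_neg_smul_of_anticommute hPN hNv
  have hPPv := mulVec_mulVec_of_mul_self hP v
  generalize hw : P *ᵥ v = w at hli hNPv hPPv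
  have hunit : IsUnit (of ![v, w])ᵀ := by
    rwa [← linearIndependent_cols_iff_isUnit]
  refine ⟨hunit.unit, ?_, ?_⟩ <;> ext i j <;> fin_cases j
  · simpa [mul_apply, mulVec, dotProduct, mul_comm] using congrFun hNv i
  · simpa [mul_apply, mulVec, dotProduct, mul_comm] using congrFun hNPv i
  · simpa [mul_apply, mulVec, dotProduct, mul_comm] using congrFun hw i
  · simpa [mul_apply, mulVec, dotProduct, mul_comm] using congrFun hPPv i

theorem exists_conj_of_anticommute {N₁ N₂ P₁ P₂ : Matrix (Fin 2) (Fin 2) K} {e : K}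
    (hc : c ≠ 0) (he : e ≠ 0) (hN₁ : N₁ * N₁ = c • 1) (hN₂ : N₂ * N₂ = c • 1)
    (hP₁ : P₁ * P₁ = e • 1) (hP₂ : P₂ * P₂ = e • 1)
    (h₁ : P₁ * N₁ = -(N₁ * P₁)) (h₂ : P₂ * N₂ = -(N₂ * P₂)) :
    ∃ Q : GL (Fin 2) K, N₂ * Q = Q * N₁ ∧ P₂ * Q = Q * P₁ := by
  obtain ⟨m, rfl⟩ := IsAlgClosed.exists_eq_mul_self c
  have hm : m ≠ 0 := left_ne_zero_of_mul hc
  obtain ⟨Q₁, hNQ₁, hPQ₁⟩ := exists_adapted_basis_of_anticommute hm he hN₁ hP₁ h₁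
  obtain ⟨Q₂, hNQ₂, hPQ₂⟩ := exists_adapted_basis_of_anticommute hm he hN₂ hP₂ h₂
  have hconj {A₁ A₂ D : Matrix (Fin 2) (Fin 2) K} (hA₁ : A₁ * Q₁ = Q₁ * D)
      (hA₂ : A₂ * Q₂ = Q₂ * D) :
      A₂ * (Q₂ * Q₁⁻¹ : GL (Fin 2) K) = (Q₂ * Q₁⁻¹ : GL (Fin 2) K) * A₁ := by
    refine Q₁.isUnit.mul_right_cancel ?_
    rw [mul_assoc, mul_assoc, hA₁, Units.val_mul, Units.inv_mul_cancel_right, hA₂,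
      mul_assoc, Units.inv_mul_cancel_left]
  exact ⟨Q₂ * Q₁⁻¹, hconj hNQ₁ hNQ₂, hconj hPQ₁ hPQ₂⟩

end Eigenvectors

open scoped MatrixGroups

/-- Representations of `G` in `SL(2, K)`. -/
abbrev SL2Rep (G K : Type*) [Group G] [CommRing K] : Type _ := G →* SL(2, K)

namespace SL2Rep

section Basic

variable {G R : Type*} [Group G] [CommRing R]

/-- The representation on `R²` underlying a homomorphism to `SL(2, R)`. -/
def toMatrix (r : SL2Rep G R) : G →* Matrix (Fin 2) (Fin 2) R :=
  SpecialLinearGroup.coeMonoidHom.comp r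

/-- The character of a representation in `SL(2, R)`. -/
def character (r : SL2Rep G R) (g : G) : R := (r.toMatrix g).trace

variable (r : SL2Rep G R) (a b c g h : G)

theorem det_toMatrix : (r.toMatrix g).det = 1 := (r g).det_coe

theorem toMatrix_mul_toMatrix_inv : r.toMatrix g * r.toMatrix g⁻¹ = 1 := by
  rw [← map_mul, mul_inv_cancel, map_one]

theorem toMatrix_inv : r.toMatrix g⁻¹ = r.character g • 1 - r.toMatrix g := by
  have h : r.toMatrix g⁻¹ = (r.toMatrix g).adjugate := by
    simp [toMatrix, SpecialLinearGroup.coeMonoidHom_apply]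
  rw [h, character, ← add_adjugate_fin_two, add_sub_cancel_left]

theorem toMatrix_mul_self : r.toMatrix g * r.toMatrix g = r.character g • r.toMatrix g - 1 := by
  rw [mul_self_fin_two, det_toMatrix, one_smul, character]

theorem character_mul : r.character (g * h) = (r.toMatrix g * r.toMatrix h).trace := by
  rw [character, map_mul]

theorem character_mul_comm : r.character (g * h) = r.character (h * g) := by
  rw [character_mul, trace_mul_comm, character_mul]

theorem character_conj : r.character (g * h * g⁻¹) = r.character h := by
  rw [character_mul_comm, inv_mul_cancel_left]

theorem character_one : r.character 1 = 2 := by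
  simp [character]

theorem character_inv_mul :
    r.character (g⁻¹ * h) = r.character g * r.character h - r.character (g * h) := by
  rw [character_mul, toMatrix_inv, sub_mul, smul_mul_assoc, one_mul, trace_sub, trace_smul,
    ← character_mul, smul_eq_mul, character, character, character]

theorem character_mul_mul_add :
    r.character (a * b * c) + r.character (a * c * b) =
      r.character a * r.character (b * c) + r.character b * r.character (c * a)
        + r.character c * r.character (a * b)
        - r.character a * r.character b * r.character c := by
  simp only [character, map_mul, trace_mul_mul_add_fin_two]

end Basic

section SquaredCharacter

variable {G K : Type*} [Group G] [Field K] [NeZero (2 : K)]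

/-- Two representations in `SL(2, K)` have the same squared character, the invariant that survives
in `PSL(2, K)`. -/
def SameSqCharacter (r₁ r₂ : SL2Rep G K) : Prop :=
  ∀ g, r₁.character g ^ 2 = r₂.character g ^ 2

variable {r₁ r₂ : SL2Rep G K} (h : SameSqCharacter r₁ r₂)

include h

omit [NeZero (2 : K)] in
theorem SameSqCharacter.symm : SameSqCharacter r₂ r₁ := fun g => (h g).symm

omit [NeZero (2 : K)] in
theorem SameSqCharacter.eq_zero_iff (g : G) : r₁.character g = 0 ↔ r₂.character g = 0 := by
  rw [← sq_eq_zero_iff, h g, sq_eq_zero_iff]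

theorem SameSqCharacter.pair_eq (a b : G) :
    r₁.character a * r₁.character b * r₁.character (a * b) =
      r₂.character a * r₂.character b * r₂.character (a * b) := by
  have hdiv := h (a⁻¹ * b)
  rw [character_inv_mul, character_inv_mul] at hdiv
  refine mul_left_cancel₀ (two_ne_zero (α := K)) ?_
  linear_combination h a * r₁.character b ^ 2 + r₂.character a ^ 2 * h b + h (a * b) - hdiv

theorem SameSqCharacter.triple_eq_of_ne_zero {a b c : G} (hbc : r₁.character (b * c) ≠ 0) :
    r₁.character a * r₁.character b * r₁.character c * r₁.character (a * b * c) =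
      r₂.character a * r₂.character b * r₂.character c * r₂.character (a * b * c) := by
  refine mul_left_cancel₀ (pow_ne_zero 2 hbc) ?_
  have hpair := h.pair_eq a (b * c)
  rw [← mul_assoc a b c] at hpair
  linear_combination h.pair_eq b c * (r₁.character a * r₁.character (b * c) *
    r₁.character (a * b * c)) + r₂.character b * r₂.character c * r₂.character (b * c) * hpair
    - r₂.character a * r₂.character b * r₂.character c * r₂.character (a * b * c) * h (b * c)

theorem SameSqCharacter.triple_eq (a b c : G) :
    r₁.character a * r₁.character b * r₁.character c * r₁.character (a * b * c) =
      r₂.character a * r₂.character b * r₂.character c * r₂.character (a * b * c) := by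
  have hcyc (r : SL2Rep G K) : r.character (b * c * a) = r.character (a * b * c) ∧
      r.character (c * a * b) = r.character (a * b * c) :=
    ⟨by rw [character_mul_comm, mul_assoc], by rw [mul_assoc, character_mul_comm]⟩
  rcases ne_or_eq (r₁.character (b * c)) 0 with hbc | hbc
  · exact h.triple_eq_of_ne_zero hbc
  rcases ne_or_eq (r₁.character (c * a)) 0 with hca | hca
  · have hbca := h.triple_eq_of_ne_zero (a := b) hca
    rw [(hcyc r₁).1, (hcyc r₂).1] at hbca
    linear_combination hbca
  rcases ne_or_eq (r₁.character (a * b)) 0 with hab | hab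
  · have hcab := h.triple_eq_of_ne_zero (a := c) hab
    rw [(hcyc r₁).2, (hcyc r₂).2] at hcab
    linear_combination hcab
  have hacb₁ := r₁.character_mul_mul_add a b c
  have hacb₂ := r₂.character_mul_mul_add a b c
  rw [hbc, hca, hab] at hacb₁
  rw [(h.eq_zero_iff _).mp hbc, (h.eq_zero_iff _).mp hca, (h.eq_zero_iff _).mp hab] at hacb₂
  have hacb := h (a * c * b)
  rw [eq_sub_of_add_eq' hacb₁, eq_sub_of_add_eq' hacb₂] at hacb
  refine mul_left_cancel₀ (two_ne_zero (α := K)) ?_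
  linear_combination hacb - h (a * b * c) - h a * (r₁.character b * r₁.character c) ^ 2
    - h b * (r₂.character a * r₁.character c) ^ 2 - h c * (r₂.character a * r₂.character b) ^ 2

end SquaredCharacter

section EvenPart

variable {G K : Type*} [Group G] [Field K]

/-- The matrix `tr(r g) • r g = (r g)² + 1`. It does not change when `r g` is replaced by `-r g`, so
it depends only on the class of `r g` in `PSL(2, K)`. -/
def evenLift (r : SL2Rep G K) (g : G) : Matrix (Fin 2) (Fin 2) K :=
  r.character g • r.toMatrix g

/-- The algebra of matrices generated by the `evenLift r g`, an invariant of the projective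
representation of `r`. It is encoded as their linear span, which is closed under multiplication. -/
def evenSpan (r : SL2Rep G K) : Submodule K (Matrix (Fin 2) (Fin 2) K) :=
  Submodule.span K (Set.range r.evenLift)

variable (r : SL2Rep G K) (a b c g h : G)

theorem toMatrix_mul_evenLift :
    r.toMatrix g * r.evenLift h = r.evenLift (g * h * g⁻¹) * r.toMatrix g := by
  rw [evenLift, evenLift, character_conj, mul_smul_comm, smul_mul_assoc, ← map_mul, ← map_mul,
    inv_mul_cancel_right]

theorem trace_evenLift_mul :
    (r.evenLift a * r.evenLift b).trace =
      r.character a * r.character b * r.character (a * b) := by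
  rw [evenLift, evenLift, smul_mul_smul_comm, trace_smul, ← character_mul, smul_eq_mul]

theorem trace_evenLift_mul_mul :
    (r.evenLift a * r.evenLift b * r.evenLift c).trace =
      r.character a * r.character b * r.character c * r.character (a * b * c) := by
  rw [evenLift, evenLift, evenLift, smul_mul_smul_comm, smul_mul_smul_comm, trace_smul, ← map_mul,
    ← character_mul, smul_eq_mul]

theorem evenLift_mul_evenLift_mem : r.evenLift a * r.evenLift b ∈ r.evenSpan := by
  have hmem (g : G) : r.evenLift g ∈ r.evenSpan := Submodule.subset_span ⟨g, rfl⟩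
  have hmul : r.evenLift a * r.evenLift b =
      (r.character a * r.character b) • r.toMatrix (a * b) := by
    rw [evenLift, evenLift, smul_mul_smul_comm, map_mul]
  rcases eq_or_ne (r.character (a * b)) 0 with hab | hab
  · have hdiv : r.character (a⁻¹ * b) = r.character a * r.character b := by
      rw [character_inv_mul, hab, sub_zero]
    have hsum : r.toMatrix (a * b) = r.character a • r.toMatrix b - r.toMatrix (a⁻¹ * b) := by
      rw [map_mul, map_mul, toMatrix_inv, sub_mul, smul_mul_assoc, one_mul, sub_sub_cancel]
    have heven : r.evenLift a * r.evenLift b =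
        r.character a ^ 2 • r.evenLift b - r.evenLift (a⁻¹ * b) := by
      rw [hmul, hsum, smul_sub, smul_smul, ← hdiv, evenLift, evenLift, hdiv, smul_smul]
      ring_nf
    rw [heven]
    exact sub_mem (Submodule.smul_mem _ _ (hmem b)) (hmem _)
  · have heven : r.evenLift a * r.evenLift b =
        (r.character a * r.character b * (r.character (a * b))⁻¹) • r.evenLift (a * b) := by
      rw [hmul, evenLift, smul_smul, inv_mul_cancel_right₀ hab]
    rw [heven]
    exact Submodule.smul_mem _ _ (hmem _)

theorem mul_mem_evenSpan {A B : Matrix (Fin 2) (Fin 2) K} (hA : A ∈ r.evenSpan)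
    (hB : B ∈ r.evenSpan) : A * B ∈ r.evenSpan := by
  have hle : r.evenSpan * r.evenSpan ≤ r.evenSpan := by
    conv_lhs => rw [evenSpan, Submodule.span_mul_span]
    rw [Submodule.span_le]
    rintro _ ⟨_, ⟨a, rfl⟩, _, ⟨b, rfl⟩, rfl⟩
    exact r.evenLift_mul_evenLift_mem a b
  exact hle (Submodule.mul_mem_mul hA hB)

theorem one_mem_evenSpan [NeZero (2 : K)] : (1 : Matrix (Fin 2) (Fin 2) K) ∈ r.evenSpan := by
  have h := r.evenSpan.smul_mem (2⁻¹ : K) (Submodule.subset_span ⟨1, rfl⟩)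
  rwa [evenLift, map_one, character_one, inv_smul_smul₀ two_ne_zero] at h

theorem hasCommonEigenvector_of_evenSpan_ne_top [IsAlgClosed K] [NeZero (2 : K)]
    (hspan : r.evenSpan ≠ ⊤) :
    HasCommonEigenvector (r.toMatrix '' {g | r.character g ≠ 0}) := by
  let S := r.evenSpan.toSubalgebra r.one_mem_evenSpan fun _ _ => r.mul_mem_evenSpan
  have hS : S ≠ ⊤ := fun htop => hspan (congrArg Subalgebra.toSubmodule htop)
  obtain ⟨v, hv, hSv⟩ := hasCommonEigenvector_of_subalgebra_ne_top hS
  refine ⟨v, hv, ?_⟩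
  rintro _ ⟨g, hg, rfl⟩
  obtain ⟨c, hc⟩ := hSv (r.evenLift g) (Submodule.subset_span ⟨g, rfl⟩)
  refine ⟨(r.character g)⁻¹ * c, ?_⟩
  rw [mul_smul, ← hc, evenLift, smul_mulVec, inv_smul_smul₀ hg]

end EvenPart

section ProjConj

variable {G K : Type*} [Group G] [Field K]

/-- `P` intertwines `r₁ g` and `r₂ g` up to sign. -/
def Intertwines (r₁ r₂ : SL2Rep G K) (P : GL (Fin 2) K) (g : G) : Prop :=
  ∃ s : K, s ^ 2 = 1 ∧ r₂.toMatrix g * P = s • (P * r₁.toMatrix g)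

/-- The projective representations underlying `r₁` and `r₂` are conjugate under `PGL(2, K)`. -/
def ProjConj (r₁ r₂ : SL2Rep G K) : Prop :=
  ∃ P : GL (Fin 2) K, ∀ g, Intertwines r₁ r₂ P g

variable {r₁ r₂ : SL2Rep G K} {P : GL (Fin 2) K} {g h : G}

theorem Intertwines.mul (hg : Intertwines r₁ r₂ P g) (hh : Intertwines r₁ r₂ P h) :
    Intertwines r₁ r₂ P (g * h) := by
  obtain ⟨s, hs, hgP⟩ := hg
  obtain ⟨s', hs', hhP⟩ := hh
  refine ⟨s * s', by rw [mul_pow, hs, hs', one_mul], ?_⟩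
  rw [map_mul, map_mul, mul_assoc, hhP, mul_smul_comm, ← mul_assoc, hgP, smul_mul_assoc,
    smul_smul, mul_assoc, mul_comm s]

theorem Intertwines.symm (hg : Intertwines r₁ r₂ P g) : Intertwines r₂ r₁ P⁻¹ g := by
  obtain ⟨s, hs, hgP⟩ := hg
  refine ⟨s, hs, P.isUnit.mul_left_cancel <| P.isUnit.mul_right_cancel ?_⟩
  rw [mul_smul_comm, smul_mul_assoc, Units.mul_inv_cancel_left, hgP, ← mul_assoc,
    Units.inv_mul_cancel_right, smul_smul, ← sq, hs, one_smul]

theorem ProjConj.symm (h : ProjConj r₁ r₂) : ProjConj r₂ r₁ :=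
  let ⟨P, hP⟩ := h
  ⟨P⁻¹, fun g => (hP g).symm⟩

theorem intertwines_of_eq_smul {z : K}
    (h : P * r₁.toMatrix g = z • (r₂.toMatrix g * P)) : Intertwines r₁ r₂ P g := by
  have hdet := congrArg det h
  rw [det_mul, det_smul, det_mul, det_toMatrix, det_toMatrix, Fintype.card_fin] at hdet
  have hz : z ^ 2 = 1 := by
    refine mul_right_cancel₀ (b := (P : Matrix (Fin 2) (Fin 2) K).det) P.det_ne_zero ?_
    linear_combination -hdet
  exact ⟨z, hz, by rw [h, smul_smul, ← sq, hz, one_smul]⟩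

theorem projConj_of_evenSpan_eq_top [NeZero (2 : K)] (h : SameSqCharacter r₁ r₂)
    (hspan : r₁.evenSpan = ⊤) : ProjConj r₁ r₂ := by
  obtain ⟨P, hP⟩ := exists_conj_of_trace_eq (Y := r₂.evenLift) hspan
    (fun a b => by rw [trace_evenLift_mul, trace_evenLift_mul, h.pair_eq])
    (fun a b c => by rw [trace_evenLift_mul_mul, trace_evenLift_mul_mul, h.triple_eq])
  refine ⟨P, fun g => ?_⟩
  let W : Matrix (Fin 2) (Fin 2) K := r₂.toMatrix g⁻¹ * P * r₁.toMatrix g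
  have hW (k : G) : W * r₁.evenLift k = r₂.evenLift k * W := by
    rw [mul_assoc, toMatrix_mul_evenLift, ← mul_assoc, mul_assoc _ _ (r₁.evenLift _), ← hP,
      ← mul_assoc, toMatrix_mul_evenLift, mul_assoc, mul_assoc, ← mul_assoc _ _ (r₁.toMatrix g)]
    congr 2
    group
  have hcomm (k : G) : Commute (P⁻¹ * W) (r₁.evenLift k) := by
    refine P.isUnit.mul_left_cancel ?_
    rw [mul_assoc, Units.mul_inv_cancel_left, hW, ← mul_assoc P.val, ← hP, mul_assoc _ P.val,
      Units.mul_inv_cancel_left]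
  obtain ⟨z, hz⟩ := exists_eq_smul_one_of_forall_commute hspan hcomm
  have hWz : W = z • P := by
    rw [← P.mul_inv_cancel_left W, hz, mul_smul_comm, mul_one]
  refine intertwines_of_eq_smul (z := z) ?_
  rw [← mul_smul_comm, ← hWz, ← mul_assoc, ← mul_assoc, toMatrix_mul_toMatrix_inv, one_mul]

end ProjConj

end SL2Rep

theorem eq_of_forall_mulVec_eq {K n : Type*} [Field K] [Fintype n]
    {b : n → n → K} (hb : LinearIndependent K b) {A B : Matrix n n K}
    (h : ∀ i, A *ᵥ b i = B *ᵥ b i) : A = B := by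
  classical
  have hunit : IsUnit (of b)ᵀ := by
    rwa [← linearIndependent_cols_iff_isUnit]
  refine hunit.mul_right_cancel ?_
  ext i j
  exact congrFun (h j) i

theorem exists_sign_of_sq_eq_sq {K : Type*} [Field K] {a b a' b' : K} (ha : a ^ 2 = a' ^ 2)
    (hb : b ^ 2 = b' ^ 2) (hab : a * b = a' * b') :
    ∃ s : K, s ^ 2 = 1 ∧ a' = s * a ∧ b' = s * b := by
  rcases eq_or_ne a 0 with rfl | ha₀
  · have ha' : a' = 0 := by simpa using ha.symm
    rcases sq_eq_sq_iff_eq_or_eq_neg.mp hb.symm with rfl | rfl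
    · exact ⟨1, by simp [ha']⟩
    · exact ⟨-1, by simp [ha']⟩
  · rcases sq_eq_sq_iff_eq_or_eq_neg.mp ha.symm with rfl | rfl
    · exact ⟨1, by simpa using (mul_left_cancel₀ ha₀ hab).symm⟩
    · refine ⟨-1, by norm_num, by simp, mul_left_cancel₀ ha₀ ?_⟩
      linear_combination hab

namespace SL2Rep

section SkewPart

variable {G R : Type*} [Group G] [CommRing R]

/-- Twice the traceless part of `r h`. When `r h` has distinct eigenvalues, this represents its
axis: it preserves the same two lines, and a matrix that commutes or anticommutes with it preserves
or exchanges them. -/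
def skewPart (r : SL2Rep G R) (h : G) : Matrix (Fin 2) (Fin 2) R :=
  r.toMatrix h - r.toMatrix h⁻¹

variable (r : SL2Rep G R) (g h : G)

theorem skewPart_eq : r.skewPart h = (2 : R) • r.toMatrix h - r.character h • 1 := by
  rw [skewPart, toMatrix_inv, two_smul]
  abel

theorem trace_skewPart : (r.skewPart h).trace = 0 := by
  rw [skewPart_eq, trace_sub, trace_smul, trace_smul, trace_one, Fintype.card_fin, character]
  simp [mul_comm]

theorem skewPart_mul_self : r.skewPart h * r.skewPart h = (r.character h ^ 2 - 4) • 1 := by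
  simp only [skewPart_eq, sub_mul, mul_sub, smul_mul_assoc, mul_smul_comm, one_mul, mul_one,
    toMatrix_mul_self]
  module

theorem trace_toMatrix_mul_skewPart :
    (r.toMatrix g * r.skewPart h).trace =
      2 * r.character (g * h) - r.character g * r.character h := by
  rw [skewPart_eq, mul_sub, mul_smul_comm, mul_smul_comm, mul_one, trace_sub, trace_smul,
    trace_smul, ← character_mul, ← character, smul_eq_mul, smul_eq_mul, mul_comm (r.character h)]

variable {r g h} in
theorem commute_skewPart_of_commute_toMatrix {X : Matrix (Fin 2) (Fin 2) R}
    (hX : Commute X (r.toMatrix h)) : Commute X (r.skewPart h) := by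
  rw [skewPart_eq]
  exact (hX.smul_right 2).sub_right ((Commute.one_right X).smul_right _)

theorem toMatrix_mul_skewPart :
    r.toMatrix g * r.skewPart h = r.skewPart (g * h * g⁻¹) * r.toMatrix g := by
  simp only [skewPart, mul_sub, sub_mul, ← map_mul]
  congr 2 <;> group

theorem anticommute_skewPart_iff {K : Type*} [Field K] [NeZero (2 : K)] {r : SL2Rep G K} {g h : G}
    (hh : r.character h ^ 2 ≠ 4) :
    r.toMatrix g * r.skewPart h = -(r.skewPart h * r.toMatrix g) ↔
      r.character g = 0 ∧ r.character (g * h) = 0 := by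
  constructor
  · intro hanti
    have hg : r.character g = 0 :=
      trace_eq_zero_of_anticommute hanti (r.skewPart_mul_self h) (sub_ne_zero.mpr hh)
    have hgN := congrArg trace hanti
    rw [trace_neg, trace_mul_comm (r.skewPart h), trace_toMatrix_mul_skewPart, hg, zero_mul,
      sub_zero] at hgN
    have h₄ : 2 * 2 * r.character (g * h) = 0 := by linear_combination hgN
    exact ⟨hg, by simpa [two_ne_zero] using h₄⟩
  · rintro ⟨hg, hgh⟩
    have hsum := mul_add_mul_fin_two (r.toMatrix g) (r.skewPart h)
    rw [trace_toMatrix_mul_skewPart, trace_skewPart, ← character, hg, hgh] at hsum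
    rw [eq_neg_iff_add_eq_zero, hsum]
    simp

end SkewPart

section Axis

variable {G K : Type*} [Group G] [Field K]

/-- Irreducibility on the plane `K²`: no line is preserved by the whole image. -/
def IsIrreducible (r : SL2Rep G K) : Prop :=
  ¬ HasCommonEigenvector (Set.range r.toMatrix)

/-- A condition on the squared character ensuring, for an irreducible `r` whose even span is
proper, that the image of `r` preserves the pair of eigenlines of `r h`. Traceless `h` qualify only
if the image in `PSL(2, K)` is a Klein four-group, where every axis is preserved. -/
def IsAxisElement (r : SL2Rep G K) (h : G) : Prop :=
  r.character h ^ 2 ≠ 4 ∧ (r.character h ≠ 0 ∨ ∀ g, r.character g = 0 ∨ r.character g ^ 2 = 4)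

theorem SameSqCharacter.isAxisElement {r₁ r₂ : SL2Rep G K} (hsame : SameSqCharacter r₁ r₂) {h : G}
    (hh : r₁.IsAxisElement h) : r₂.IsAxisElement h := by
  simpa only [IsAxisElement, hsame _, ne_eq, hsame.eq_zero_iff] using hh

variable [NeZero (2 : K)] {r : SL2Rep G K} {g h : G}

theorem character_ne_zero_of_sq_eq_four (hg : r.character g ^ 2 = 4) : r.character g ≠ 0 := by
  intro h₀
  have h₄ : (2 : K) * 2 = 0 := by linear_combination r.character g * h₀ - hg
  simp [two_ne_zero] at h₄

variable [IsAlgClosed K]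

theorem exists_eigenbasis_of_evenSpan_ne_top (hr : r.IsIrreducible) (hspan : r.evenSpan ≠ ⊤) :
    ∃ b : Fin 2 → Fin 2 → K, LinearIndependent K b ∧
      ∀ g, r.character g ≠ 0 → ∀ i, ∃ c : K, r.toMatrix g *ᵥ b i = c • b i := by
  obtain ⟨v, hv, heig⟩ := r.hasCommonEigenvector_of_evenSpan_ne_top hspan
  rw [Set.forall_mem_image] at heig
  obtain ⟨k, hk⟩ : ∃ k, ∀ c : K, c • v ≠ r.toMatrix k *ᵥ v := by
    by_contra! hall
    refine hr ⟨v, hv, ?_⟩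
    rintro _ ⟨k, rfl⟩
    exact (hall k).imp fun _ => Eq.symm
  refine ⟨![v, r.toMatrix k *ᵥ v], (LinearIndependent.pair_iff' hv).mpr hk, fun g hg i => ?_⟩
  fin_cases i
  · exact heig hg
  · obtain ⟨c, hc⟩ := heig (x := k⁻¹ * g * k⁻¹⁻¹) (by rwa [Set.mem_ofPred_eq, character_conj])
    refine ⟨c, ?_⟩
    rw [inv_inv] at hc
    have hgk : g * k = k * (k⁻¹ * g * k) := by group
    change r.toMatrix g *ᵥ (r.toMatrix k *ᵥ v) = c • (r.toMatrix k *ᵥ v)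
    rw [mulVec_mulVec, ← map_mul, hgk, map_mul, ← mulVec_mulVec, hc, mulVec_smul]

theorem commute_toMatrix_of_character_ne_zero (hr : r.IsIrreducible) (hspan : r.evenSpan ≠ ⊤)
    (hg : r.character g ≠ 0) (hh : r.character h ≠ 0) :
    Commute (r.toMatrix g) (r.toMatrix h) := by
  obtain ⟨b, hb, heig⟩ := exists_eigenbasis_of_evenSpan_ne_top hr hspan
  refine eq_of_forall_mulVec_eq hb fun i => ?_
  obtain ⟨α, hα⟩ := heig g hg i
  obtain ⟨β, hβ⟩ := heig h hh i
  rw [← mulVec_mulVec, ← mulVec_mulVec, hα, hβ, mulVec_smul, mulVec_smul, hα, hβ, smul_comm]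

theorem two_smul_toMatrix_of_character_sq_eq_four (hr : r.IsIrreducible) (hspan : r.evenSpan ≠ ⊤)
    (hg : r.character g ^ 2 = 4) : (2 : K) • r.toMatrix g = r.character g • 1 := by
  obtain ⟨b, hb, heig⟩ := exists_eigenbasis_of_evenSpan_ne_top hr hspan
  refine eq_of_forall_mulVec_eq hb fun i => ?_
  obtain ⟨α, hα⟩ := heig g (character_ne_zero_of_sq_eq_four hg) i
  have hroot : α * α = r.character g * α - 1 := by
    refine smul_left_injective K (hb.ne_zero i) ?_
    have h := congrArg (· *ᵥ b i) (r.toMatrix_mul_self g)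
    simpa only [← mulVec_mulVec, hα, mulVec_smul, sub_mulVec, smul_mulVec, one_mulVec, smul_smul,
      sub_smul, one_smul] using h
  have hdouble : 2 * α = r.character g := by
    rw [← sub_eq_zero, ← sq_eq_zero_iff]
    linear_combination 4 * hroot + hg
  rw [smul_mulVec, smul_mulVec, one_mulVec, hα, smul_smul, hdouble]

theorem commute_of_character_sq_eq_four (hr : r.IsIrreducible) (hspan : r.evenSpan ≠ ⊤)
    (hg : r.character g ^ 2 = 4) (X : Matrix (Fin 2) (Fin 2) K) : Commute (r.toMatrix g) X := by
  rw [← Commute.smul_left_iff₀ (two_ne_zero (α := K)),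
    two_smul_toMatrix_of_character_sq_eq_four hr hspan hg]
  exact (Commute.one_left X).smul_left _

theorem exists_isAxisElement (hr : r.IsIrreducible) (hspan : r.evenSpan ≠ ⊤) :
    ∃ h, r.IsAxisElement h := by
  by_cases hgen : ∃ h, r.character h ≠ 0 ∧ r.character h ^ 2 ≠ 4
  · obtain ⟨h, h₀, h₄⟩ := hgen
    exact ⟨h, h₄, Or.inl h₀⟩
  have hKlein : ∀ g, r.character g = 0 ∨ r.character g ^ 2 = 4 := by
    simpa only [not_exists, not_and_or, not_not, ne_eq] using hgen
  obtain ⟨h, hh⟩ : ∃ h, r.character h ^ 2 ≠ 4 := by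
    by_contra! hall
    have huniv : {g | r.character g ≠ 0} = Set.univ :=
      Set.eq_univ_of_forall fun g => character_ne_zero_of_sq_eq_four (hall g)
    have heig := r.hasCommonEigenvector_of_evenSpan_ne_top hspan
    rw [huniv, Set.image_univ] at heig
    exact hr heig
  exact ⟨h, hh, Or.inr hKlein⟩

theorem skewPart_conj_eq_smul (hr : r.IsIrreducible) (hspan : r.evenSpan ≠ ⊤)
    (h₄ : r.character h ^ 2 ≠ 4) (h₀ : r.character h ≠ 0) (g : G) :
    ∃ β : K, β ^ 2 = 1 ∧ r.skewPart (g * h * g⁻¹) = β • r.skewPart h := by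
  have hc : r.character h ^ 2 - 4 ≠ 0 := sub_ne_zero.mpr h₄
  have hconj₀ : r.character (g * h * g⁻¹) ≠ 0 := by rwa [character_conj]
  have hcomm : Commute (r.skewPart (g * h * g⁻¹)) (r.skewPart h) :=
    commute_skewPart_of_commute_toMatrix <| .symm <| commute_skewPart_of_commute_toMatrix <|
      commute_toMatrix_of_character_ne_zero hr hspan h₀ hconj₀
  have hsmul := smul_eq_of_commute_of_mul_self hcomm (r.trace_skewPart h) (r.skewPart_mul_self h)
  rw [trace_skewPart, mul_zero, zero_smul, zero_add,
    ← eq_inv_smul_iff₀ (mul_ne_zero two_ne_zero hc), smul_smul] at hsmul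
  refine ⟨_, ?_, hsmul⟩
  have hsq := r.skewPart_mul_self (g * h * g⁻¹)
  rw [hsmul, smul_mul_smul_comm, skewPart_mul_self, character_conj, smul_smul] at hsq
  have hcancel := smul_left_injective K (one_ne_zero (α := Matrix (Fin 2) (Fin 2) K)) hsq
  rw [sq]
  exact mul_right_cancel₀ hc (hcancel.trans (one_mul _).symm)

theorem commute_or_anticommute_of_character_ne_zero (hr : r.IsIrreducible)
    (hspan : r.evenSpan ≠ ⊤) (h₄ : r.character h ^ 2 ≠ 4) (h₀ : r.character h ≠ 0) (g : G) :
    Commute (r.toMatrix g) (r.skewPart h) ∨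
      r.toMatrix g * r.skewPart h = -(r.skewPart h * r.toMatrix g) := by
  obtain ⟨β, hβ, hconj⟩ := skewPart_conj_eq_smul hr hspan h₄ h₀ g
  have hg := r.toMatrix_mul_skewPart g h
  rcases sq_eq_one_iff.mp hβ with rfl | rfl
  · exact Or.inl (by rwa [hconj, one_smul] at hg)
  · exact Or.inr (by rwa [hconj, neg_smul, one_smul, neg_mul] at hg)

theorem commute_or_anticommute_of_forall_character (hr : r.IsIrreducible)
    (hspan : r.evenSpan ≠ ⊤) (h₄ : r.character h ^ 2 ≠ 4)
    (hall : ∀ g, r.character g = 0 ∨ r.character g ^ 2 = 4) (g : G) :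
    Commute (r.toMatrix g) (r.skewPart h) ∨
      r.toMatrix g * r.skewPart h = -(r.skewPart h * r.toMatrix g) := by
  rcases hall g with hg | hg
  · rcases hall (g * h) with hgh | hgh
    · exact Or.inr ((anticommute_skewPart_iff h₄).mpr ⟨hg, hgh⟩)
    · have hinv : Commute (r.toMatrix h⁻¹) (r.toMatrix h) :=
        (Commute.refl h).inv_left.map r.toMatrix
      have hcomm := (commute_of_character_sq_eq_four hr hspan hgh (r.skewPart h)).mul_left
        (commute_skewPart_of_commute_toMatrix hinv)
      rw [← map_mul, mul_inv_cancel_right] at hcomm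
      exact Or.inl hcomm
  · exact Or.inl (commute_of_character_sq_eq_four hr hspan hg _)

theorem IsAxisElement.commute_or_anticommute (hh : r.IsAxisElement h) (hr : r.IsIrreducible)
    (hspan : r.evenSpan ≠ ⊤) (g : G) :
    Commute (r.toMatrix g) (r.skewPart h) ∨
      r.toMatrix g * r.skewPart h = -(r.skewPart h * r.toMatrix g) :=
  hh.2.elim (fun h₀ => commute_or_anticommute_of_character_ne_zero hr hspan hh.1 h₀ g)
    fun hall => commute_or_anticommute_of_forall_character hr hspan hh.1 hall g

theorem IsAxisElement.exists_anticommute (hh : r.IsAxisElement h) (hr : r.IsIrreducible)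
    (hspan : r.evenSpan ≠ ⊤) :
    ∃ g, r.toMatrix g * r.skewPart h = -(r.skewPart h * r.toMatrix g) := by
  by_contra! hne
  refine hr (hasCommonEigenvector_of_commute (r.trace_skewPart h) (r.skewPart_mul_self h)
    (sub_ne_zero.mpr hh.1) ?_)
  rintro _ ⟨g, rfl⟩
  exact (hh.commute_or_anticommute hr hspan g).resolve_right (hne g)

end Axis

section Dihedral

variable {G K : Type*} [Group G] [Field K] {r r₁ r₂ : SL2Rep G K} {g h : G}

theorem trace_toMatrix_mul_skewPart_sq (hg : Commute (r.toMatrix g) (r.skewPart h)) :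
    (r.toMatrix g * r.skewPart h).trace ^ 2 =
      (r.character h ^ 2 - 4) * (r.character g ^ 2 - 4) := by
  rw [trace_mul_sq_of_commute_of_mul_self hg (r.trace_skewPart h) (r.skewPart_mul_self h),
    det_toMatrix, mul_one, ← character]

theorem smul_toMatrix_eq_of_commute (hg : Commute (r.toMatrix g) (r.skewPart h)) :
    (2 * (r.character h ^ 2 - 4)) • r.toMatrix g =
      ((r.character h ^ 2 - 4) * r.character g) • 1 +
        (r.toMatrix g * r.skewPart h).trace • r.skewPart h :=
  smul_eq_of_commute_of_mul_self hg (r.trace_skewPart h) (r.skewPart_mul_self h)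

variable [NeZero (2 : K)] (hsame : SameSqCharacter r₁ r₂) (hh : r₁.IsAxisElement h)
  (hg₁ : Commute (r₁.toMatrix g) (r₁.skewPart h)) (hg₂ : Commute (r₂.toMatrix g) (r₂.skewPart h))

include hsame hh hg₁ hg₂

theorem SameSqCharacter.character_mul_trace_mul_skewPart_eq {σ : K}
    (hσ : r₂.character h = σ * r₁.character h) :
    r₁.character g * (r₁.toMatrix g * r₁.skewPart h).trace =
      r₂.character g * (σ * (r₂.toMatrix g * r₂.skewPart h).trace) := by
  rcases hh.2 with h₀ | hall
  · refine mul_left_cancel₀ h₀ ?_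
    rw [trace_toMatrix_mul_skewPart, trace_toMatrix_mul_skewPart]
    linear_combination 2 * hsame.pair_eq g h - hsame g * r₁.character h ^ 2
      - r₂.character g ^ 2 * hsame h + r₂.character g *
        (2 * r₂.character (g * h) - r₂.character g * r₂.character h) * hσ
  · rcases hall g with hg | hg
    · rw [hg, (hsame.eq_zero_iff g).mp hg, zero_mul, zero_mul]
    · have hu₁ := trace_toMatrix_mul_skewPart_sq hg₁
      have hu₂ := trace_toMatrix_mul_skewPart_sq hg₂
      rw [hg, sub_self, mul_zero, sq_eq_zero_iff] at hu₁
      rw [← hsame g, hg, sub_self, mul_zero, sq_eq_zero_iff] at hu₂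
      rw [hu₁, hu₂, mul_zero, mul_zero, mul_zero]

theorem intertwines_of_commute {σ : K} (hσ₁ : σ ^ 2 = 1)
    (hσ : r₂.character h = σ * r₁.character h) {Q : GL (Fin 2) K}
    (hQ : (σ • r₂.skewPart h) * Q = Q * r₁.skewPart h) : Intertwines r₁ r₂ Q g := by
  have hu : (r₁.toMatrix g * r₁.skewPart h).trace ^ 2 =
      (σ * (r₂.toMatrix g * r₂.skewPart h).trace) ^ 2 := by
    rw [mul_pow, hσ₁, one_mul, trace_toMatrix_mul_skewPart_sq hg₁,
      trace_toMatrix_mul_skewPart_sq hg₂, hsame g, hsame h]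
  obtain ⟨s, hs, hsg, hsu⟩ := exists_sign_of_sq_eq_sq (hsame g) hu
    (hsame.character_mul_trace_mul_skewPart_eq hh hg₁ hg₂ hσ)
  have hc : 2 * (r₁.character h ^ 2 - 4) ≠ 0 := mul_ne_zero two_ne_zero (sub_ne_zero.mpr hh.1)
  have hNQ : r₂.skewPart h * Q = σ • (Q * r₁.skewPart h) := by
    rw [← hQ, smul_mul_assoc, smul_smul, ← sq, hσ₁, one_smul]
  refine ⟨s, hs, smul_right_injective _ hc ?_⟩
  calc (2 * (r₁.character h ^ 2 - 4)) • (r₂.toMatrix g * Q)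
      = ((r₁.character h ^ 2 - 4) * r₂.character g) • Q.val +
          (σ * (r₂.toMatrix g * r₂.skewPart h).trace) • (Q * r₁.skewPart h) := by
        rw [← smul_mul_assoc, hsame h, smul_toMatrix_eq_of_commute hg₂, add_mul,
          smul_mul_assoc, smul_mul_assoc, one_mul, hNQ, smul_smul, mul_comm σ]
    _ = s • (Q.val * ((2 * (r₁.character h ^ 2 - 4)) • r₁.toMatrix g)) := by
        rw [hsg, hsu, smul_toMatrix_eq_of_commute hg₁, mul_add, mul_smul_comm,
          mul_smul_comm, mul_one, smul_add, smul_smul, smul_smul, mul_left_comm]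
    _ = (2 * (r₁.character h ^ 2 - 4)) • s • (Q.val * r₁.toMatrix g) := by
        rw [mul_smul_comm, smul_comm]

end Dihedral

section Conjugacy

variable {G K : Type*} [Group G] [Field K] [NeZero (2 : K)] {r r₁ r₂ : SL2Rep G K} {g g₀ h : G}

theorem commute_mul_inv_of_anticommute (hh : r.character h ^ 2 ≠ 4)
    (hg : r.toMatrix g * r.skewPart h = -(r.skewPart h * r.toMatrix g))
    (hg₀ : r.toMatrix g₀ * r.skewPart h = -(r.skewPart h * r.toMatrix g₀)) :
    Commute (r.toMatrix (g * g₀⁻¹)) (r.skewPart h) := by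
  rw [map_mul, toMatrix_inv, ((anticommute_skewPart_iff hh).mp hg₀).1, zero_smul, zero_sub, mul_neg]
  refine Commute.neg_left ?_
  rw [Commute, SemiconjBy, mul_assoc, hg₀, mul_neg, ← mul_assoc, hg, neg_mul, neg_neg, mul_assoc]

theorem SameSqCharacter.anticommute_iff (hsame : SameSqCharacter r₁ r₂)
    (hh : r₁.character h ^ 2 ≠ 4) (g : G) :
    r₁.toMatrix g * r₁.skewPart h = -(r₁.skewPart h * r₁.toMatrix g) ↔
      r₂.toMatrix g * r₂.skewPart h = -(r₂.skewPart h * r₂.toMatrix g) := by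
  rw [anticommute_skewPart_iff hh, anticommute_skewPart_iff (hsame h ▸ hh), hsame.eq_zero_iff,
    hsame.eq_zero_iff]

variable [IsAlgClosed K]

theorem exists_conj_axis (hsame : SameSqCharacter r₁ r₂) (hh : r₁.character h ^ 2 ≠ 4)
    (hg : r₁.toMatrix g * r₁.skewPart h = -(r₁.skewPart h * r₁.toMatrix g))
    {σ : K} (hσ : σ ^ 2 = 1) :
    ∃ Q : GL (Fin 2) K, (σ • r₂.skewPart h) * Q = Q * r₁.skewPart h ∧
      r₂.toMatrix g * Q = Q * r₁.toMatrix g := by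
  have hg₁ := ((anticommute_skewPart_iff hh).mp hg).1
  have hg₂ := (hsame.eq_zero_iff g).mp hg₁
  have hsq {r : SL2Rep G K} (hr : r.character g = 0) :
      r.toMatrix g * r.toMatrix g = (-1 : K) • 1 := by
    rw [toMatrix_mul_self, hr, zero_smul, zero_sub, neg_smul, one_smul]
  have hN₂ : (σ • r₂.skewPart h) * (σ • r₂.skewPart h) = (r₁.character h ^ 2 - 4) • 1 := by
    rw [smul_mul_smul_comm, ← sq, hσ, one_smul, skewPart_mul_self, hsame h]
  refine exists_conj_of_anticommute (sub_ne_zero.mpr hh) (neg_ne_zero.mpr one_ne_zero)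
    (r₁.skewPart_mul_self h) hN₂ (hsq hg₁) (hsq hg₂) hg ?_
  rw [mul_smul_comm, (hsame.anticommute_iff hh g).mp hg, smul_mul_assoc, smul_neg]

theorem projConj_of_evenSpan_ne_top (hsame : SameSqCharacter r₁ r₂) (hr₁ : r₁.IsIrreducible)
    (hr₂ : r₂.IsIrreducible) (hspan₁ : r₁.evenSpan ≠ ⊤) (hspan₂ : r₂.evenSpan ≠ ⊤) :
    ProjConj r₁ r₂ := by
  obtain ⟨h, hh₁⟩ := exists_isAxisElement hr₁ hspan₁
  have hh₂ := hsame.isAxisElement hh₁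
  obtain ⟨g₀, hg₀⟩ := hh₁.exists_anticommute hr₁ hspan₁
  have hanti_iff := hsame.anticommute_iff hh₁.1
  obtain ⟨σ, hσ₁, hσ, -⟩ :=
    exists_sign_of_sq_eq_sq (b := 0) (b' := 0) (hsame h) rfl (by rw [mul_zero, mul_zero])
  obtain ⟨Q, hN, hP⟩ := exists_conj_axis hsame hh₁.1 hg₀ hσ₁
  have hcomm {g : G} (hg₁ : Commute (r₁.toMatrix g) (r₁.skewPart h))
      (hg₂ : Commute (r₂.toMatrix g) (r₂.skewPart h)) : Intertwines r₁ r₂ Q g :=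
    intertwines_of_commute hsame hh₁ hg₁ hg₂ hσ₁ hσ hN
  refine ⟨Q, fun g => ?_⟩
  by_cases hg : r₁.toMatrix g * r₁.skewPart h = -(r₁.skewPart h * r₁.toMatrix g)
  · have hdiv : Intertwines r₁ r₂ Q (g * g₀⁻¹) :=
      hcomm (commute_mul_inv_of_anticommute hh₁.1 hg hg₀) <|
        commute_mul_inv_of_anticommute hh₂.1 ((hanti_iff g).mp hg) ((hanti_iff g₀).mp hg₀)
    have hbase : Intertwines r₁ r₂ Q g₀ := ⟨1, one_pow 2, by rw [hP, one_smul]⟩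
    simpa using hdiv.mul hbase
  · exact hcomm ((hh₁.commute_or_anticommute hr₁ hspan₁ g).resolve_right hg) <|
      (hh₂.commute_or_anticommute hr₂ hspan₂ g).resolve_right fun hg₂ => hg ((hanti_iff g).mpr hg₂)

theorem projConj_of_sameSqCharacter (hsame : SameSqCharacter r₁ r₂) (hr₁ : r₁.IsIrreducible)
    (hr₂ : r₂.IsIrreducible) : ProjConj r₁ r₂ := by
  by_cases hspan₁ : r₁.evenSpan = ⊤
  · exact projConj_of_evenSpan_eq_top hsame hspan₁
  by_cases hspan₂ : r₂.evenSpan = ⊤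
  · exact (projConj_of_evenSpan_eq_top hsame.symm hspan₂).symm
  exact projConj_of_evenSpan_ne_top hsame hr₁ hr₂ hspan₁ hspan₂

end Conjugacy

end SL2Rep

section ComplexPSL

theorem pslProj_eq_iff {A B : SpecialLinearGroup (Fin 2) ℂ} :
    pslProj A = pslProj B ↔
      ∃ s : ℂ, s ^ 2 = 1 ∧ (A : Matrix (Fin 2) (Fin 2) ℂ) = s • (B : Matrix (Fin 2) (Fin 2) ℂ) := by
  rw [eq_comm, QuotientGroup.mk'_apply, QuotientGroup.mk'_apply, QuotientGroup.eq,
    Matrix.SpecialLinearGroup.mem_center_iff, Fintype.card_fin]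
  refine exists_congr fun s => and_congr_right fun _ => ?_
  have hB : (B : Matrix (Fin 2) (Fin 2) ℂ) * (B⁻¹ : SpecialLinearGroup (Fin 2) ℂ) = 1 := by
    rw [← Matrix.SpecialLinearGroup.coe_mul, mul_inv_cancel, Matrix.SpecialLinearGroup.coe_one]
  have hB' : (B⁻¹ : SpecialLinearGroup (Fin 2) ℂ) * (B : Matrix (Fin 2) (Fin 2) ℂ) = 1 := by
    rw [← Matrix.SpecialLinearGroup.coe_mul, inv_mul_cancel, Matrix.SpecialLinearGroup.coe_one]
  rw [Matrix.SpecialLinearGroup.coe_mul, scalar_apply, ← smul_one_eq_diagonal]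
  constructor
  · intro h
    rw [← one_mul A.val, ← hB, mul_assoc, ← h, mul_smul_comm, mul_one]
  · intro h
    rw [h, mul_smul_comm, hB']

theorem SL2Rep.ProjConj.exists_pslProj_conj {G : Type*} [Group G] {r₁ r₂ : SL2Rep G ℂ}
    (h : r₁.ProjConj r₂) :
    ∃ C : SpecialLinearGroup (Fin 2) ℂ, ∀ g,
      pslProj (r₂ g) = pslProj C * pslProj (r₁ g) * (pslProj C)⁻¹ := by
  obtain ⟨P, hP⟩ := h
  obtain ⟨d, hd⟩ := IsAlgClosed.exists_pow_nat_eq P.val.det two_pos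
  have hd₀ : d ≠ 0 := by
    rintro rfl
    exact P.det_ne_zero (by rw [← hd, zero_pow two_ne_zero])
  let C : SpecialLinearGroup (Fin 2) ℂ := ⟨d⁻¹ • P.val, by
    rw [det_smul, Fintype.card_fin, ← hd, inv_pow, inv_mul_cancel₀ (pow_ne_zero 2 hd₀)]⟩
  refine ⟨C, fun g => ?_⟩
  obtain ⟨s, hs, hg⟩ := hP g
  rw [eq_mul_inv_iff_mul_eq, ← map_mul, ← map_mul, pslProj_eq_iff]
  refine ⟨s, hs, ?_⟩
  change r₂.toMatrix g * (d⁻¹ • P.val) = s • (d⁻¹ • P.val * r₁.toMatrix g)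
  rw [mul_smul_comm, hg, smul_mul_assoc, smul_comm]

variable {Γ : Type*} [Group Γ]

/-- The group of pairs of lifts to `SL(2, ℂ)` of the values `ρ₁ γ`, `ρ₂ γ` at a common `γ`. Its two
projections lift `ρ₁` and `ρ₂` to genuine representations in `SL(2, ℂ)`, without choosing signs. -/
def liftPairs (ρ₁ ρ₂ : Γ →* PSL2) :
    Subgroup (SpecialLinearGroup (Fin 2) ℂ × SpecialLinearGroup (Fin 2) ℂ) :=
  (ρ₁.prod ρ₂).range.comap (pslProj.prodMap pslProj)

variable {ρ₁ ρ₂ : Γ →* PSL2}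

theorem exists_of_mem_liftPairs (p : liftPairs ρ₁ ρ₂) :
    ∃ γ, pslProj p.1.1 = ρ₁ γ ∧ pslProj p.1.2 = ρ₂ γ := by
  obtain ⟨γ, hγ⟩ := p.2
  exact ⟨γ, (congrArg Prod.fst hγ).symm, (congrArg Prod.snd hγ).symm⟩

theorem mk_mem_liftPairs {γ : Γ} {A B : SpecialLinearGroup (Fin 2) ℂ} (hA : pslProj A = ρ₁ γ)
    (hB : pslProj B = ρ₂ γ) : (A, B) ∈ liftPairs ρ₁ ρ₂ :=
  ⟨γ, Prod.ext hA.symm hB.symm⟩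

theorem IsIrreduciblePSL.isIrreducible {G : Type*} [Group G] {ρ : Γ →* PSL2} {r : SL2Rep G ℂ}
    (hρ : IsIrreduciblePSL ρ) (hlift : ∀ γ A, pslProj A = ρ γ → ∃ g, r g = A) :
    r.IsIrreducible := by
  rintro ⟨v, hv, heig⟩
  refine hρ ⟨v, hv, fun γ A hA => ?_⟩
  obtain ⟨g, rfl⟩ := hlift γ A hA
  exact heig _ ⟨g, rfl⟩

end ComplexPSL

theorem irreducible_same_character_conjugate_general
    {Γ : Type*} [Group Γ]
    (ρ₁ ρ₂ : Γ →* PSL2)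
    (h₁ : IsIrreduciblePSL ρ₁) (h₂ : IsIrreduciblePSL ρ₂)
    (hchar : ∀ γ : Γ, ∀ A₁ A₂ : SpecialLinearGroup (Fin 2) ℂ,
      pslProj A₁ = ρ₁ γ → pslProj A₂ = ρ₂ γ →
      (Matrix.trace (A₁ : Matrix (Fin 2) (Fin 2) ℂ)) ^ 2
        = (Matrix.trace (A₂ : Matrix (Fin 2) (Fin 2) ℂ)) ^ 2) :
    ∃ C : SpecialLinearGroup (Fin 2) ℂ, ∀ γ : Γ,
      ρ₂ γ = pslProj C * ρ₁ γ * (pslProj C)⁻¹ := by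
  have hsurj : Function.Surjective pslProj := QuotientGroup.mk'_surjective _
  let r₁ : SL2Rep (liftPairs ρ₁ ρ₂) ℂ := (MonoidHom.fst _ _).comp (liftPairs ρ₁ ρ₂).subtype
  let r₂ : SL2Rep (liftPairs ρ₁ ρ₂) ℂ := (MonoidHom.snd _ _).comp (liftPairs ρ₁ ρ₂).subtype
  have hirr₁ : r₁.IsIrreducible := h₁.isIrreducible fun γ A hA =>
    let ⟨B, hB⟩ := hsurj (ρ₂ γ)
    ⟨⟨(A, B), mk_mem_liftPairs hA hB⟩, rfl⟩
  have hirr₂ : r₂.IsIrreducible := h₂.isIrreducible fun γ B hB =>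
    let ⟨A, hA⟩ := hsurj (ρ₁ γ)
    ⟨⟨(A, B), mk_mem_liftPairs hA hB⟩, rfl⟩
  have hsame : SL2Rep.SameSqCharacter r₁ r₂ := fun p =>
    let ⟨γ, hA, hB⟩ := exists_of_mem_liftPairs p
    hchar γ _ _ hA hB
  obtain ⟨C, hC⟩ := (SL2Rep.projConj_of_sameSqCharacter hsame hirr₁ hirr₂).exists_pslProj_conj
  refine ⟨C, fun γ => ?_⟩
  obtain ⟨A, hA⟩ := hsurj (ρ₁ γ)
  obtain ⟨B, hB⟩ := hsurj (ρ₂ γ)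
  rw [← hA, ← hB]
  exact hC ⟨(A, B), mk_mem_liftPairs hA hB⟩

/-- Two irreducible representations of a finitely generated group `Γ` in `PSL(2,ℂ)`
with the same character (squared trace of any lifts) are conjugate. -/
theorem irreducible_same_character_conjugate
    {Γ : Type*} [Group Γ] (hfg : Group.FG Γ)
    (ρ₁ ρ₂ : Γ →* PSL2)
    (h₁ : IsIrreduciblePSL ρ₁) (h₂ : IsIrreduciblePSL ρ₂)
    (hchar : ∀ γ : Γ, ∀ A₁ A₂ : SpecialLinearGroup (Fin 2) ℂ,
      pslProj A₁ = ρ₁ γ → pslProj A₂ = ρ₂ γ →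
      (Matrix.trace (A₁ : Matrix (Fin 2) (Fin 2) ℂ)) ^ 2
        = (Matrix.trace (A₂ : Matrix (Fin 2) (Fin 2) ℂ)) ^ 2) :
    ∃ C : SpecialLinearGroup (Fin 2) ℂ, ∀ γ : Γ,
      ρ₂ γ = pslProj C * ρ₁ γ * (pslProj C)⁻¹ :=
  irreducible_same_character_conjugate_general ρ₁ ρ₂ h₁ h₂ hchar
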